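/- (Theorem 4.4(ii), converse duality.) Let (z̄, ȳ*, μ̄) be feasible for the Mond–Weir robust dual (with respect to the subdifferential data S, T) and suppose in addition z̄ ∈ F. If (f,g) is type II pseudo convex at z̄, then z̄ is a robust efficient solution, i.e., f(z) − f(z̄) ∉ −(K \ {0}) for every z ∈ F. -/

import Mathlib

/-!
For robust feasible `z`, every subgradient of a worst-case constraint with positive multiplier is
nonpositive on `z - y`, and this survives passing to the weak* closed convex hull, because
`{w | w (z - y) ≤ 0}` is a weak* closed half-space. Stationarity therefore forces the objective
subgradient `v` to satisfy `0 ≤ v (z - y)`, and pseudoconvexity turns this into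
`w (f y) < w (f z)` whenever `z ≠ y`. As `w` is nonnegative on `K`, the difference `f z - f y`
cannot lie in `-(K \ {0})`.
-/

theorem apply_le_of_mem_closure_convexHull {𝕜 E β : Type*}
    [Semiring 𝕜] [PartialOrder 𝕜] [AddCommMonoid E] [Module 𝕜 E] [TopologicalSpace E]
    [AddCommMonoid β] [PartialOrder β] [IsOrderedAddMonoid β] [Module 𝕜 β] [PosSMulMono 𝕜 β]
    [TopologicalSpace β] [ClosedIicTopology β] {A : Set E} {r : β} (φ : E →L[𝕜] β)
    (hA : ∀ x ∈ A, φ x ≤ r) {x : E} (hx : x ∈ closure (convexHull 𝕜 A)) : φ x ≤ r :=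
  closure_minimal (convexHull_min hA (convex_halfSpace_le φ.toLinearMap.isLinear r))
    (isClosed_Iic.preimage φ.continuous) hx

/-- The robust feasible set `F`: the points satisfying every constraint in every scenario. -/
def robustFeasibleSet {ι Z 𝒰 : Type*} (g : ι → Z → 𝒰 → ℝ) : Set Z :=
  {z | ∀ i u, g i z u ≤ 0}

section WorstCase

variable {Z 𝒰 : Type*} [AddCommMonoid Z] [Module ℝ Z] [TopologicalSpace Z]

/-- Evaluation at `d` as a weak* continuous linear functional on the dual. -/
noncomputable def weakDualEval (d : Z) : WeakDual ℝ Z →L[ℝ] ℝ :=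
  WeakBilin.eval (topDualPairing ℝ Z) d

theorem weakDualEval_apply (d : Z) (w : WeakDual ℝ Z) : weakDualEval d w = w d :=
  rfl

/-- The worst-case scenarios for a constraint: the maximizers of `h = g i y`, written `𝒰ᵢ(y)`. -/
def worstCases (h : 𝒰 → ℝ) : Set 𝒰 :=
  {u | ∀ u', h u' ≤ h u}

/-- The weak* closed convex hull of the subdifferentials `T u` over the worst-case scenarios `u`
of a constraint `h`. It replaces the subdifferential of the worst-case function `y ↦ ⨆ u, g i y u`
in the multiplier rule. -/
def worstCaseSubdifferential (h : 𝒰 → ℝ) (T : 𝒰 → Set (WeakDual ℝ Z)) : Set (WeakDual ℝ Z) :=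
  closure (convexHull ℝ (⋃ u ∈ worstCases h, T u))

variable {h : 𝒰 → ℝ} {T : 𝒰 → Set (WeakDual ℝ Z)} {w : WeakDual ℝ Z} {d : Z}

theorem apply_le_of_mem_worstCaseSubdifferential {r : ℝ}
    (hT : ∀ u ∈ worstCases h, ∀ w ∈ T u, w d ≤ r) (hw : w ∈ worstCaseSubdifferential h T) :
    w d ≤ r := by
  refine apply_le_of_mem_closure_convexHull (weakDualEval d) (fun w' hw' ↦ ?_) hw
  obtain ⟨u, hu, hw'u⟩ := Set.mem_iUnion₂.mp hw'
  exact hT u hu w' hw'u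

theorem mul_apply_nonpos_of_mem_worstCaseSubdifferential {c : ℝ} (hc : 0 ≤ c)
    (hch : ∀ u ∈ worstCases h, 0 ≤ c * h u)
    (hT : ∀ u ∈ worstCases h, 0 ≤ h u → ∀ w ∈ T u, w d ≤ 0)
    (hw : w ∈ worstCaseSubdifferential h T) : c * w d ≤ 0 := by
  obtain rfl | hc_pos := hc.eq_or_lt
  · exact (zero_mul _).le
  · refine mul_nonpos_of_nonneg_of_nonpos hc (apply_le_of_mem_worstCaseSubdifferential ?_ hw)
    exact fun u hu ↦ hT u hu (nonneg_of_mul_nonneg_right (hch u hu) hc_pos)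

end WorstCase

section MondWeirDual

variable {ι Z Y 𝒰 : Type*} [AddCommGroup Z] [Module ℝ Z] [TopologicalSpace Z]
  [AddCommGroup Y] [Module ℝ Y] [TopologicalSpace Y]

/-- The constraint half of pseudoconvexity of `(f, g)` at `y`, condition (b), shared by types I
and II. The sets `T i y u` stand for the subdifferentials of `g i · u` at `y`. -/
def ConstraintsPseudoconvexAt (g : ι → Z → 𝒰 → ℝ) (T : ι → Z → 𝒰 → Set (WeakDual ℝ Z))
    (y : Z) : Prop :=
  ∀ z u i, g i z u ≤ g i y u → ∀ w ∈ T i y u, w (z - y) ≤ 0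

/-- Type II pseudoconvexity of `(f, g)` at `y`. The set `S y w` stands for the subdifferential of
the scalarized objective `w ∘ f` at `y`; membership of `w` in the dual cone `K⁺` is spelled out. -/
structure TypeIIPseudoconvexAt (K : Set Y) (f : Z → Y) (g : ι → Z → 𝒰 → ℝ)
    (S : Z → (Y →L[ℝ] ℝ) → Set (WeakDual ℝ Z)) (T : ι → Z → 𝒰 → Set (WeakDual ℝ Z))
    (y : Z) : Prop where
  objective : ∀ z, z ≠ y → ∀ w : Y →L[ℝ] ℝ, (∀ k ∈ K, 0 ≤ w k) → w ≠ 0 →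
    w (f z) ≤ w (f y) → ∀ v ∈ S y w, v (z - y) < 0
  constraints : ConstraintsPseudoconvexAt g T y

/-- Feasibility of `(y, w, μ)` for the Mond–Weir robust dual; membership of `w` in the dual cone
`K⁺` is spelled out. -/
structure MondWeirFeasible [Fintype ι] (K : Set Y) (g : ι → Z → 𝒰 → ℝ)
    (S : Z → (Y →L[ℝ] ℝ) → Set (WeakDual ℝ Z)) (T : ι → Z → 𝒰 → Set (WeakDual ℝ Z))
    (y : Z) (w : Y →L[ℝ] ℝ) (μ : ι → ℝ) : Prop where
  nonneg_on_cone : ∀ k ∈ K, 0 ≤ w k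
  ne_zero : w ≠ 0
  multiplier_nonneg : ∀ i, 0 ≤ μ i
  stationary : ∃ v ∈ S y w, ∃ u' : ι → WeakDual ℝ Z,
    (∀ i, u' i ∈ worstCaseSubdifferential (g i y) (T i y)) ∧ 0 = v + ∑ i, μ i • u' i
  sign : ∀ i, ∀ u ∈ worstCases (g i y), 0 ≤ μ i * g i y u

variable [Fintype ι] {K : Set Y} {f : Z → Y} {g : ι → Z → 𝒰 → ℝ}
  {S : Z → (Y →L[ℝ] ℝ) → Set (WeakDual ℝ Z)} {T : ι → Z → 𝒰 → Set (WeakDual ℝ Z)}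
  {y z : Z} {w : Y →L[ℝ] ℝ} {μ : ι → ℝ}

theorem MondWeirFeasible.exists_subgradient_nonneg (hdual : MondWeirFeasible K g S T y w μ)
    (hg : ConstraintsPseudoconvexAt g T y) :
    ∃ v ∈ S y w, ∀ z ∈ robustFeasibleSet g, 0 ≤ v (z - y) := by
  obtain ⟨v, hv, u', hu', hstat⟩ := hdual.stationary
  refine ⟨v, hv, fun z hz ↦ ?_⟩
  have hterm (i : ι) : μ i * u' i (z - y) ≤ 0 :=
    mul_apply_nonpos_of_mem_worstCaseSubdifferential (hdual.multiplier_nonneg i) (hdual.sign i)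
      (fun u _ hu ↦ hg z u i ((hz i u).trans hu)) (hu' i)
  have hsum : ∑ i, μ i * u' i (z - y) ≤ 0 := Finset.sum_nonpos fun i _ ↦ hterm i
  have heval : 0 = v (z - y) + ∑ i, μ i * u' i (z - y) := by
    simpa only [map_zero, map_add, map_sum, map_smul, weakDualEval_apply, smul_eq_mul]
      using congrArg (weakDualEval (z - y)) hstat
  linarith

theorem MondWeirFeasible.apply_objective_lt (hdual : MondWeirFeasible K g S T y w μ)
    (hpc : TypeIIPseudoconvexAt K f g S T y) (hz : z ∈ robustFeasibleSet g) (hzy : z ≠ y) :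
    w (f y) < w (f z) := by
  obtain ⟨v, hv, hv_nonneg⟩ := hdual.exists_subgradient_nonneg hpc.constraints
  by_contra! hle
  have hv_neg : v (z - y) < 0 :=
    hpc.objective z hzy w hdual.nonneg_on_cone hdual.ne_zero hle v hv
  exact hv_neg.not_ge (hv_nonneg z hz)

theorem converse_duality_typeII_general (hdual : MondWeirFeasible K g S T y w μ)
    (hpc : TypeIIPseudoconvexAt K f g S T y) :
    ∀ z ∈ robustFeasibleSet g, f z - f y ∉ -(K \ {0}) := by
  intro z hz hmem
  have hzy : z ≠ y := by
    rintro rfl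
    exact hmem.2 (by simp)
  have hlt : w (f y) < w (f z) := hdual.apply_objective_lt hpc hz hzy
  have hge : 0 ≤ w (-(f z - f y)) := hdual.nonneg_on_cone _ hmem.1
  rw [neg_sub, map_sub] at hge
  linarith

end MondWeirDual

theorem converse_duality_typeII
    {Z Y : Type*} [NormedAddCommGroup Z] [NormedSpace ℝ Z]
    [NormedAddCommGroup Y] [NormedSpace ℝ Y]
    (K : Set Y) (hKconvex : Convex ℝ K)
    (hKcone : ∀ (c : ℝ), 0 < c → ∀ y ∈ K, c • y ∈ K)
    (hKpointed : K ∩ (-K) = {0})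
    {𝒰 : Type*} [Nonempty 𝒰]
    (n : ℕ) (hn : 0 < n)
    (g : Fin n → Z → 𝒰 → ℝ)
    (f : Z → Y)
    -- subdifferential data
    (S : Z → (Y →L[ℝ] ℝ) → Set (WeakDual ℝ Z))
    (T : Fin n → Z → 𝒰 → Set (WeakDual ℝ Z))
    -- zbar is robust feasible
    (zbar : Z) (hzbarF : ∀ i : Fin n, ∀ u : 𝒰, g i zbar u ≤ 0)
    -- (zbar, y', μ) is feasible for the Mond-Weir robust dual
    (y' : Y →L[ℝ] ℝ) (hy'K : ∀ k ∈ K, 0 ≤ y' k) (hy'0 : y' ≠ 0)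
    (μ : Fin n → ℝ) (hμ : ∀ i, 0 ≤ μ i)
    (v' : WeakDual ℝ Z) (hv' : v' ∈ S zbar y')
    (u' : Fin n → WeakDual ℝ Z)
    (hu' : ∀ i, u' i ∈
      closure (convexHull ℝ (⋃ u ∈ {u : 𝒰 | ∀ u', g i zbar u' ≤ g i zbar u}, T i zbar u)))
    (hfeas : (0 : WeakDual ℝ Z) = v' + ∑ i, μ i • u' i)
    (hsign : ∀ i : Fin n, ∀ u : 𝒰, (∀ u', g i zbar u' ≤ g i zbar u) → 0 ≤ μ i * g i zbar u)
    -- (f, g) is type II pseudo convex at zbar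
    (hpcII_a : ∀ z : Z, z ≠ zbar → ∀ w : Y →L[ℝ] ℝ, (∀ k ∈ K, 0 ≤ w k) → w ≠ 0 →
      w (f z) ≤ w (f zbar) → ∀ v ∈ S zbar w, v (z - zbar) < 0)
    (hpcII_b : ∀ z : Z, ∀ u : 𝒰, ∀ i : Fin n, g i z u ≤ g i zbar u →
      ∀ w ∈ T i zbar u, w (z - zbar) ≤ 0)
 :
    ∀ z : Z, (∀ i : Fin n, ∀ u : 𝒰, g i z u ≤ 0) →
      f z - f zbar ∉ -(K \ {0}) :=
  converse_duality_typeII_general ⟨hy'K, hy'0, hμ, ⟨v', hv', u', hu', hfeas⟩, hsign⟩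
    ⟨hpcII_a, hpcII_b⟩
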